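/- For every real r > −r₀, the function k̄ is differentiable at r and k̄′(r)/φ̄(r) = −(1/(n−1))·k̄(r)²·(1 − (n/2)·exp(−((n−2)/(n−1))(r + r₀)))/(1 − exp(−((n−2)/(n−1))(r + r₀))). -/

import Mathlib

/-! Writing `k̄ = φ₀⁻¹ √X`, one has `φ̄ = 1 / k̄` (`φbar_eq_inv_kbar`), so `k̄' / φ̄ = k̄' k̄ =
φ₀⁻² X' / 2`. With `e = exp (-(n-2)/(n-1) (r + r₀))`, the logarithmic derivative of `X` is
`((n-2)/(n-1)) e / (1 - e) - 2/(n-1)`, and putting this over the common denominator `1 - e` gives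
the formula. The condition `r > -r₀` makes `X` positive, hence `√X` differentiable. -/

open Real

noncomputable def kbar (n : ℕ) (r₀ φ₀ : ℝ) (r : ℝ) : ℝ :=
  φ₀⁻¹ * Real.sqrt
    (((1 - Real.exp (-((((n : ℝ) - 2) / ((n : ℝ) - 1)) * (r + r₀)))) /
      (1 - Real.exp (-((((n : ℝ) - 2) / ((n : ℝ) - 1)) * r₀)))) *
      Real.exp (-((2 / ((n : ℝ) - 1)) * r)))

noncomputable def φbar (n : ℕ) (r₀ φ₀ : ℝ) (r : ℝ) : ℝ :=
  φ₀ * Real.sqrt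
    (((1 - Real.exp (-((((n : ℝ) - 2) / ((n : ℝ) - 1)) * r₀))) /
      (1 - Real.exp (-((((n : ℝ) - 2) / ((n : ℝ) - 1)) * (r + r₀))))) *
      Real.exp ((2 / ((n : ℝ) - 1)) * r))

/-- The lapse of the slices is the reciprocal of their mean curvature. This holds for every real `r`:
the junk values of `√` and `/` are compatible with inversion. -/
lemma φbar_eq_inv_kbar (n : ℕ) (r₀ φ₀ r : ℝ) :
    φbar n r₀ φ₀ r = (kbar n r₀ φ₀ r)⁻¹ := by
  unfold φbar kbar
  rw [mul_inv, inv_inv, ← Real.sqrt_inv, mul_inv, inv_div, ← Real.exp_neg, neg_neg]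

theorem kbar_deriv (n : ℕ) (hn : 3 ≤ n) (r₀ φ₀ : ℝ)
    (hr₀ : 0 < r₀) (hφ₀ : 0 < φ₀) :
    ∀ r : ℝ, r > -r₀ →
      DifferentiableAt ℝ (kbar n r₀ φ₀) r ∧
      deriv (kbar n r₀ φ₀) r / φbar n r₀ φ₀ r =
        -(1 / ((n : ℝ) - 1)) * (kbar n r₀ φ₀ r) ^ 2 *
          (1 - ((n : ℝ) / 2) *
              Real.exp (-((((n : ℝ) - 2) / ((n : ℝ) - 1)) * (r + r₀)))) /
          (1 - Real.exp (-((((n : ℝ) - 2) / ((n : ℝ) - 1)) * (r + r₀)))) := by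
  intro r hr
  have hn' : (3 : ℝ) ≤ n := by exact_mod_cast hn
  have hm : (0 : ℝ) < (n : ℝ) - 1 := by linarith
  rw [φbar_eq_inv_kbar, div_inv_eq_mul]
  unfold kbar
  set a : ℝ := ((n : ℝ) - 2) / ((n : ℝ) - 1) with ha
  have ha0 : 0 < a := div_pos (by linarith) hm
  have hA : 0 < 1 - Real.exp (-(a * (r + r₀))) := by
    have : Real.exp (-(a * (r + r₀))) < 1 :=
      Real.exp_lt_one_iff.mpr (neg_lt_zero.mpr (mul_pos ha0 (by linarith)))
    linarith
  have hB : 0 < 1 - Real.exp (-(a * r₀)) := by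
    have : Real.exp (-(a * r₀)) < 1 :=
      Real.exp_lt_one_iff.mpr (neg_lt_zero.mpr (mul_pos ha0 hr₀))
    linarith
  have hX : 0 < (1 - Real.exp (-(a * (r + r₀)))) / (1 - Real.exp (-(a * r₀))) *
      Real.exp (-(2 / ((n : ℝ) - 1) * r)) := by positivity
  have h1 : HasDerivAt (fun x : ℝ => Real.exp (-(a * (x + r₀))))
      (Real.exp (-(a * (r + r₀))) * -(a * 1)) r :=
    (((hasDerivAt_id r).add_const r₀).const_mul a).neg.exp
  have h2 : HasDerivAt (fun x : ℝ => Real.exp (-(2 / ((n : ℝ) - 1) * x)))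
      (Real.exp (-(2 / ((n : ℝ) - 1) * r)) * -(2 / ((n : ℝ) - 1) * 1)) r :=
    ((hasDerivAt_id r).const_mul (2 / ((n : ℝ) - 1))).neg.exp
  have h3 := ((((h1.const_sub 1).div_const (1 - Real.exp (-(a * r₀)))).mul h2).sqrt
    hX.ne').const_mul φ₀⁻¹
  refine ⟨h3.differentiableAt, ?_⟩
  refine (congrArg (· * _) h3.deriv).trans ?_
  simp only [Pi.mul_apply]
  rw [mul_pow, Real.sq_sqrt hX.le]
  -- The product `k̄' k̄` contains `√X` once in a numerator and once in a denominator.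
  have key : ∀ s d : ℝ, s ≠ 0 → φ₀⁻¹ * (d / (2 * s)) * (φ₀⁻¹ * s) = φ₀⁻¹ ^ 2 * (d / 2) := by
    intro s d h
    field_simp
  rw [key _ _ (Real.sqrt_pos.mpr hX).ne']
  generalize Real.exp (-(a * (r + r₀))) = e at *
  generalize Real.exp (-(2 / ((n : ℝ) - 1) * r)) = E at *
  generalize 1 - Real.exp (-(a * r₀)) = B at *
  rw [ha]
  have hA' := hA.ne'
  have hB' := hB.ne'
  have hm' := hm.ne'
  field_simp
  ring
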